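/- Let m be a positive integer, S ⊂ ℤᵐ a finite set, and q : ℝᵐ → ℂ a 1-periodic trigonometric polynomial with frequencies in S, i.e. q(z) = Σ_{k ∈ S} a_k exp(2πi⟨k, z⟩). Let h : ℝᵐ → ℝ be continuous, 1-periodic in each coordinate, and nonnegative. Then there exist finitely many 1-periodic complex trigonometric polynomials p₁, …, p_J with frequencies in S such that for all x ∈ ℝᵐ: ∫_{[0,1]^m} |q(x − y)|² h(y) dy = Σ_{j=1}^{J} |p_j(x)|². -/

import Mathlib

open MeasureTheory

/-- `trigChar k z = exp(2πi⟨k, z⟩)`, the complex exponential with frequency `k ∈ ℤᵐ`. -/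
noncomputable def trigChar {m : ℕ} (k : Fin m → ℤ) (z : Fin m → ℝ) : ℂ :=
  Complex.exp (2 * (Real.pi : ℂ) * Complex.I * ∑ i, (k i : ℂ) * (z i : ℂ))

lemma trigChar_sub {m : ℕ} (k : Fin m → ℤ) (x y : Fin m → ℝ) :
    trigChar k (x - y) = trigChar k x * trigChar k (-y) := by
  simp only [trigChar, ← Complex.exp_add, ← mul_add, ← Finset.sum_add_distrib, sub_eq_add_neg,
    Pi.add_apply, Complex.ofReal_add]

lemma continuous_trigChar {m : ℕ} (k : Fin m → ℤ) : Continuous (trigChar k) := by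
  unfold trigChar
  fun_prop

/-- The squared norm of a linear combination of finitely many vectors is a sum of squared moduli
of linear forms in the coefficients. -/
lemma exists_norm_sum_smul_sq_eq_sum {𝕜 E ι : Type*} [RCLike 𝕜] [NormedAddCommGroup E]
    [InnerProductSpace 𝕜 E] (s : Finset ι) (F : ι → E) :
    ∃ (J : ℕ) (c : Fin J → ι → 𝕜), ∀ v : ι → 𝕜,
      ‖∑ k ∈ s, v k • F k‖ ^ 2 = ∑ j, ‖∑ k ∈ s, c j k * v k‖ ^ 2 := by
  classical
  let V : Submodule 𝕜 E := Submodule.span 𝕜 (s.image F)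
  let b := stdOrthonormalBasis 𝕜 V
  refine ⟨_, fun j k ↦ inner 𝕜 (b j : E) (F k), fun v ↦ ?_⟩
  have hw : ∑ k ∈ s, v k • F k ∈ V := Submodule.sum_mem _ fun k hk ↦
    V.smul_mem _ (Submodule.subset_span (Finset.mem_coe.2 (Finset.mem_image_of_mem F hk)))
  have hb := b.sum_sq_norm_inner_right ⟨_, hw⟩
  rw [Submodule.coe_norm] at hb
  rw [← hb]
  simp [Submodule.coe_inner, inner_sum, inner_smul_right, mul_comm]

lemma MeasureTheory.MemLp.toLp_finsetSum {α E ι : Type*} [MeasurableSpace α] {μ : Measure α}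
    [NormedAddCommGroup E] {p : ENNReal} (s : Finset ι) {f : ι → α → E}
    (hf : ∀ i, MemLp (f i) p μ) :
    (memLp_finsetSum s fun i _ ↦ hf i).toLp (fun y ↦ ∑ i ∈ s, f i y) =
      ∑ i ∈ s, (hf i).toLp (f i) := by
  classical
  induction s using Finset.induction_on with
  | empty => exact MemLp.toLp_zero _
  | insert i s hi ih =>
    rw [Finset.sum_insert hi, ← ih, ← MemLp.toLp_add]
    exact MemLp.toLp_congr _ _ (.of_forall fun y ↦ Finset.sum_insert hi)

lemma MeasureTheory.MemLp.norm_toLp_sq_eq_integral {α 𝕜 E : Type*} [RCLike 𝕜]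
    [MeasurableSpace α] {μ : Measure α} [NormedAddCommGroup E] [InnerProductSpace 𝕜 E]
    {f : α → E} (hf : MemLp f 2 μ) : ‖hf.toLp f‖ ^ 2 = ∫ y, ‖f y‖ ^ 2 ∂μ := by
  have h2 := hf.eLpNorm_eq_integral_rpow_norm two_ne_zero ENNReal.ofNat_ne_top
  have h0 : 0 ≤ ∫ y, ‖f y‖ ^ 2 ∂μ := integral_nonneg fun y ↦ by positivity
  simp only [ENNReal.toReal_ofNat, Real.rpow_ofNat] at h2
  rw [Lp.norm_toLp, h2, ENNReal.toReal_ofReal (by positivity), ← Real.rpow_natCast,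
    ← Real.rpow_mul h0]
  norm_num

/-- the kernel operator produces sums of squares. Let `S ⊂ ℤᵐ` be finite
and `q(z) = Σ_{k ∈ S} a_k exp(2πi⟨k, z⟩)` a 1-periodic trigonometric polynomial with
frequencies in `S`. For every continuous, 1-periodic, nonnegative `h : ℝᵐ → ℝ` there exist
finitely many complex trigonometric polynomials `p₁, …, p_J` with frequencies in `S` such
that `∫_{[0,1]^m} |q(x − y)|² h(y) dy = Σ_j |p_j(x)|²` for all `x ∈ ℝᵐ`. -/
theorem kernel_operator_sos (m : ℕ) (hm : 0 < m)
    (S : Finset (Fin m → ℤ)) (a : (Fin m → ℤ) → ℂ)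
    (h : (Fin m → ℝ) → ℝ) (hcont : Continuous h)
    (hper : ∀ (z : Fin m → ℝ) (i : Fin m), h (Function.update z i (z i + 1)) = h z)
    (hnn : ∀ z, 0 ≤ h z) :
    ∃ (J : ℕ) (p : Fin J → (Fin m → ℝ) → ℂ),
      (∀ j, ∃ c : (Fin m → ℤ) → ℂ, ∀ z, p j z = ∑ k ∈ S, c k * trigChar k z) ∧
      ∀ x : Fin m → ℝ,
        (∫ y in Set.Icc (0 : Fin m → ℝ) 1,
          ‖∑ k ∈ S, a k * trigChar k (x - y)‖ ^ 2 * h y) = ∑ j, ‖p j x‖ ^ 2 := by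
  let μ : Measure (Fin m → ℝ) := volume.restrict (Set.Icc 0 1)
  let f (k : Fin m → ℤ) (y : Fin m → ℝ) : ℂ := a k * trigChar k (-y) * (√(h y) : ℝ)
  have hf (k) : MemLp (f k) 2 μ := by
    have hfc : Continuous (f k) := by
      have := continuous_trigChar k
      fun_prop
    obtain ⟨C, hC⟩ := isCompact_Icc.exists_bound_of_continuousOn
      (hfc.continuousOn (s := Set.Icc (0 : Fin m → ℝ) 1))
    have : IsFiniteMeasure μ := isFiniteMeasure_restrict.2 isCompact_Icc.measure_lt_top.ne
    exact MemLp.of_bound hfc.aestronglyMeasurable C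
      ((ae_restrict_iff' measurableSet_Icc).2 (.of_forall hC))
  obtain ⟨J, c, hc⟩ := exists_norm_sum_smul_sq_eq_sum (𝕜 := ℂ) S fun k ↦ (hf k).toLp (f k)
  refine ⟨J, fun j z ↦ ∑ k ∈ S, c j k * trigChar k z, fun j ↦ ⟨c j, fun _ ↦ rfl⟩, fun x ↦ ?_⟩
  rw [← hc fun k ↦ trigChar k x]
  have hsmul (k) : MemLp (fun y ↦ trigChar k x • f k y) 2 μ := (hf k).const_smul (trigChar k x)
  have hsum : MemLp (fun y ↦ ∑ k ∈ S, trigChar k x • f k y) 2 μ :=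
    memLp_finsetSum S fun k _ ↦ hsmul k
  have heq : ∑ k ∈ S, trigChar k x • (hf k).toLp (f k) = hsum.toLp _ :=
    (MemLp.toLp_finsetSum S hsmul).symm
  rw [heq, hsum.norm_toLp_sq_eq_integral (𝕜 := ℂ)]
  refine integral_congr_ae (.of_forall fun y ↦ ?_)
  have hfac : ∑ k ∈ S, trigChar k x • f k y =
      (∑ k ∈ S, a k * trigChar k (x - y)) * (√(h y) : ℝ) := by
    rw [Finset.sum_mul]
    refine Finset.sum_congr rfl fun k _ ↦ ?_
    rw [trigChar_sub, smul_eq_mul]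
    ring
  simp only [hfac, norm_mul, mul_pow, Complex.norm_real, Real.norm_eq_abs, sq_abs,
    Real.sq_sqrt (hnn y)]
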